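/- Let m ≥ 2 be an integer with m ≡ 11 (mod 20), let f(x) = x^m on ℤ_5, let t = ν_5(m − 1), and let 𝕚 be the unique element of ℤ_5 with 𝕚² = −1 and 𝕚 − 2 ∈ 5ℤ_5. For each integer l ≥ 0, each i ∈ {1, 2, 3, 4}, and each a ∈ {0, 1, …, 5^(t−1) − 1}, set M_{l,a,i,1} = 1 + 5^(l+1)·i + 5^(l+2)·a + 5^(t+l+1)ℤ_5, M_{l,a,i,2} = −1 + 5^(l+1)·i + 5^(l+2)·a + 5^(t+l+1)ℤ_5, and M_{l,a,i,3} = (𝕚 + 5^(l+1)·i + 5^(l+2)·a + 5^(t+l+1)ℤ_5) ∪ (−𝕚 − 5^(l+1)·i − 5^(l+2)·a + 5^(t+l+1)ℤ_5). Then these sets are pairwise disjoint clopen subsets of ℤ_5, each is a minimal component of f (f-invariant with every forward orbit dense in it), and their union together with the periodic-point set {1, −1, 𝕚, −𝕚} equals the set of 5-adic units ℤ_5 \ 5ℤ_5; moreover 1, −1 are fixed points of f while f(𝕚) = −𝕚 and f(−𝕚) = 𝕚. -/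

import Mathlib

open Filter Topology

instance : Fact (Nat.Prime 5) := ⟨by norm_num⟩

/-!
By lifting the exponent, near a root of unity `c` fixed by `f x = x ^ m` the orbit of `x` satisfies
`‖f^[a] x - f^[b] x‖ = ‖x - c‖ * ‖m - 1‖ * ‖a - b‖`: up to the factor `‖x - c‖ * ‖m - 1‖` it is an
isometric copy of `ℕ ⊆ ℤ_[p]`. Counting residues modulo powers of `p`, its closure is the whole
closed ball of that radius around `x`. Each fourth root of unity in `ℤ_[5]` is fixed by `f` or, like
`𝕚`, swapped with its negative, in which case the same applies to `f^[2]`. Writing `x - c` as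
`5 ^ (l + 1)` times a unit, and that unit modulo `5 ^ t` by its digits, lists the balls.
-/

namespace PadicMonomial

open Metric Set Function

section Minimal

variable {X : Type*} [TopologicalSpace X] {f : X → X} {A B : Set X}

/-- A minimal component of a dynamical system `f`: a clopen invariant set in which the forward
orbit of each point is dense. -/
structure IsMinimalComponent (f : X → X) (A : Set X) : Prop where
  isClopen : IsClopen A
  mapsTo : MapsTo f A A
  subset_closure : ∀ x ∈ A, A ⊆ closure (range fun n ↦ f^[n] x)

theorem isMinimalComponent_pow_iff [Monoid X] {m : ℕ} :
    IsMinimalComponent (· ^ m) A ↔ IsClopen A ∧ (∀ x ∈ A, x ^ m ∈ A) ∧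
      ∀ x ∈ A, A ⊆ closure (range fun n : ℕ ↦ x ^ m ^ n) :=
  ⟨fun h ↦ ⟨h.isClopen, h.mapsTo, by simpa only [pow_iterate] using h.subset_closure⟩,
    fun ⟨hclopen, hmaps, hdense⟩ ↦ ⟨hclopen, hmaps, by simpa only [pow_iterate] using hdense⟩⟩

theorem IsMinimalComponent.union_of_iterate_two (hA : IsMinimalComponent f^[2] A)
    (hB : IsMinimalComponent f^[2] B) (hAB : MapsTo f A B) (hBA : MapsTo f B A) :
    IsMinimalComponent f (A ∪ B) := by
  have orbit_two (x : X) : (range fun n ↦ (f^[2])^[n] x) ⊆ range fun n ↦ f^[n] x := by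
    rintro _ ⟨n, rfl⟩
    exact ⟨2 * n, by simp only [iterate_mul]⟩
  have orbit_apply (x : X) : (range fun n ↦ f^[n] (f x)) ⊆ range fun n ↦ f^[n] x := by
    rintro _ ⟨n, rfl⟩
    exact ⟨n + 1, iterate_succ_apply f n x⟩
  have dense_union {C D : Set X} (hC : IsMinimalComponent f^[2] C)
      (hD : IsMinimalComponent f^[2] D) (hCD : MapsTo f C D) {x : X} (hx : x ∈ C) :
      C ∪ D ⊆ closure (range fun n ↦ f^[n] x) :=
    union_subset ((hC.subset_closure x hx).trans (closure_mono (orbit_two x)))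
      ((hD.subset_closure (f x) (hCD hx)).trans
        (closure_mono ((orbit_two _).trans (orbit_apply x))))
  refine ⟨hA.isClopen.union hB.isClopen, ?_, ?_⟩
  · rintro x (hx | hx)
    exacts [.inr (hAB hx), .inl (hBA hx)]
  · rintro x (hx | hx)
    exacts [dense_union hA hB hAB hx, union_comm A B ▸ dense_union hB hA hBA hx]

end Minimal

variable {p : ℕ} [hp : Fact p.Prime]

section Norm

theorem dvd_iff_norm_le {a b : ℤ_[p]} : a ∣ b ↔ ‖b‖ ≤ ‖a‖ := by
  constructor
  · rintro ⟨k, rfl⟩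
    simpa only [norm_mul] using mul_le_of_le_one_right (norm_nonneg a) k.norm_le_one
  · intro h
    rcases eq_or_ne a 0 with rfl | ha
    · simpa using h
    · have ha' : (a : ℚ_[p]) ≠ 0 := PadicInt.coe_ne_zero.2 ha
      refine ⟨⟨b / a, ?_⟩, Subtype.ext ?_⟩
      · rw [norm_div]
        exact div_le_one_of_le₀ h (norm_nonneg _)
      · exact (mul_div_cancel₀ _ ha').symm

theorem norm_eq_one_iff_not_dvd {x : ℤ_[p]} : ‖x‖ = 1 ↔ ¬(p : ℤ_[p]) ∣ x := by
  rw [← PadicInt.norm_lt_one_iff_dvd, ← PadicInt.not_isUnit_iff, not_not, PadicInt.isUnit_iff]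

theorem norm_eq_one_of_pow_eq_one {x : ℤ_[p]} {d : ℕ} (hd : d ≠ 0) (hx : x ^ d = 1) : ‖x‖ = 1 :=
  PadicInt.isUnit_iff.1 (IsUnit.of_pow_eq_one hx hd)

theorem norm_eq_of_norm_sub_lt {x y : ℤ_[p]} (h : ‖x - y‖ < ‖y‖) : ‖x‖ = ‖y‖ := by
  rw [sub_eq_add_neg, ← norm_neg y] at h
  rw [PadicInt.norm_eq_of_norm_add_lt_right h, norm_neg]

theorem toZMod_eq_toZMod_iff {x y : ℤ_[p]} :
    PadicInt.toZMod x = PadicInt.toZMod y ↔ ‖x - y‖ < 1 := by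
  rw [← sub_eq_zero, ← map_sub, ← RingHom.mem_ker, PadicInt.ker_toZMod,
    IsLocalRing.mem_maximalIdeal, PadicInt.mem_nonunits]

theorem toZModPow_eq_toZModPow_iff {s : ℕ} {x y : ℤ_[p]} :
    PadicInt.toZModPow s x = PadicInt.toZModPow s y ↔ ‖x - y‖ ≤ ‖(p : ℤ_[p]) ^ s‖ := by
  rw [← sub_eq_zero, ← map_sub, ← RingHom.mem_ker, PadicInt.ker_toZModPow,
    Ideal.mem_span_singleton, dvd_iff_norm_le]

theorem norm_natCast_eq_norm_pow_padicValNat {n : ℕ} (hn : n ≠ 0) :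
    ‖(n : ℤ_[p])‖ = ‖(p : ℤ_[p]) ^ padicValNat p n‖ := by
  obtain ⟨g, hg⟩ := pow_padicValNat_dvd (p := p) (n := n)
  have hpg : ¬p ∣ g := fun ⟨k, hk⟩ ↦
    pow_succ_padicValNat_not_dvd (p := p) hn ⟨k, by rw [pow_succ, mul_assoc, ← hk, ← hg]⟩
  have hg1 : ‖(g : ℤ_[p])‖ = 1 :=
    PadicInt.norm_natCast_eq_one_iff.2 ((Nat.Prime.coprime_iff_not_dvd hp.out).2 hpg)
  conv_lhs => rw [hg]
  rw [Nat.cast_mul, norm_mul, hg1, mul_one, Nat.cast_pow]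

theorem norm_natCast_sub_one {m : ℕ} (hm : 1 < m) :
    ‖(m : ℤ_[p]) - 1‖ = ‖(p : ℤ_[p]) ^ padicValNat p (m - 1)‖ := by
  rw [← norm_natCast_eq_norm_pow_padicValNat (by omega), Nat.cast_sub hm.le, Nat.cast_one]

end Norm

section LiftingTheExponent

variable {x y : ℤ_[p]}

theorem norm_geom_sum₂_of_prime (hodd : Odd p) (hxy : ‖x - y‖ < 1) (hx : ‖x‖ = 1) {q : ℕ}
    (hq : q.Prime) :
    ‖∑ i ∈ Finset.range q, x ^ i * y ^ (q - 1 - i)‖ = ‖(q : ℤ_[p])‖ := by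
  rw [PadicInt.norm_lt_one_iff_dvd] at hxy
  rw [norm_eq_one_iff_not_dvd] at hx
  by_cases hqp : q = p
  · subst hqp
    obtain ⟨⟨w, hw⟩, hsq⟩ := (emultiplicity_eq_coe (n := 1)).1
      (emultiplicity_geom_sum₂_eq_one PadicInt.prime_p hodd hxy hx)
    rw [pow_one] at hw
    have hw1 : ‖w‖ = 1 := norm_eq_one_iff_not_dvd.2 fun ⟨k, hk⟩ ↦
      hsq ⟨k, by rw [hw, hk]; ring⟩
    rw [hw, norm_mul, hw1, mul_one]
  · have hq1 : ‖(q : ℤ_[p])‖ = 1 :=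
      PadicInt.norm_natCast_eq_one_iff.2 ((Nat.coprime_primes hp.out hq).2 (Ne.symm hqp))
    rw [hq1, norm_eq_one_iff_not_dvd]
    exact not_dvd_geom_sum₂ PadicInt.prime_p hxy hx (norm_eq_one_iff_not_dvd.1 hq1)

theorem norm_pow_sub_pow (hodd : Odd p) (hxy : ‖x - y‖ < 1) (hx : ‖x‖ = 1) (n : ℕ) :
    ‖x ^ n - y ^ n‖ = ‖x - y‖ * ‖(n : ℤ_[p])‖ := by
  induction n using Nat.recOnMul generalizing x y with
  | zero => simp
  | one => simp
  | prime q hq => rw [← geom_sum₂_mul, norm_mul, norm_geom_sum₂_of_prime hodd hxy hx hq, mul_comm]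
  | mul m n hm hn =>
    have hlt : ‖x ^ m - y ^ m‖ < 1 := by
      rw [hm hxy hx]
      exact mul_lt_one_of_nonneg_of_lt_one_left (norm_nonneg _) hxy (PadicInt.norm_le_one _)
    rw [pow_mul, pow_mul, hn hlt (by rw [norm_pow, hx, one_pow]), hm hxy hx, Nat.cast_mul,
      norm_mul, mul_assoc]

theorem eq_of_pow_eq_pow_of_norm_sub_lt_one (hodd : Odd p) (hx : ‖x‖ = 1) {d : ℕ} (hd : d ≠ 0)
    (hpow : x ^ d = y ^ d) (hxy : ‖x - y‖ < 1) : x = y := by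
  have h := norm_pow_sub_pow hodd hxy hx d
  rw [hpow, sub_self, norm_zero, zero_eq_mul, norm_eq_zero, norm_eq_zero] at h
  exact sub_eq_zero.1 (h.resolve_right (by exact_mod_cast hd))

theorem norm_pow_sub_mul (hodd : Odd p) {c ε : ℤ_[p]} (hx : ‖x‖ = 1) (hxc : ‖x - c‖ < 1) {m : ℕ}
    (hc : c ^ m = ε * c) : ‖x ^ m - ε * x‖ = ‖x - c‖ * ‖(m : ℤ_[p]) - 1‖ := by
  have hc1 : ‖c‖ = 1 := by
    rw [← hx]
    exact norm_eq_of_norm_sub_lt (by rwa [norm_sub_rev, hx])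
  have hmul : ‖x ^ m - ε * x‖ = ‖c * x ^ m - c ^ m * x‖ := by
    rw [hc, show c * x ^ m - ε * c * x = c * (x ^ m - ε * x) by ring, norm_mul, hc1, one_mul]
  rw [hmul]
  cases m with
  | zero => simp [norm_sub_rev]
  | succ k =>
    have hfactor : c * x ^ (k + 1) - c ^ (k + 1) * x = c * x * (x ^ k - c ^ k) := by ring
    rw [hfactor, norm_mul, norm_mul, hc1, hx, norm_pow_sub_pow hodd hxc hx]
    simp

end LiftingTheExponent

section Dilation

/- For each `s`, the values `v 0, …, v (p ^ s - 1)` are distinct modulo `p ^ s`, hence meet every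
residue class. -/
theorem denseRange_of_norm_sub_eq {v : ℕ → ℤ_[p]}
    (hv : ∀ a b : ℕ, ‖v a - v b‖ = ‖(a : ℤ_[p]) - b‖) : DenseRange v := by
  intro z
  rw [Metric.mem_closure_range_iff]
  intro δ hδ
  obtain ⟨s, hs⟩ := PadicInt.exists_pow_neg_lt p hδ
  have hinj : Injective fun a : ZMod (p ^ s) ↦ PadicInt.toZModPow s (v a.val) := by
    intro a b hab
    rw [toZModPow_eq_toZModPow_iff, hv, ← toZModPow_eq_toZModPow_iff] at hab
    simpa only [map_natCast, ZMod.natCast_zmod_val] using hab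
  obtain ⟨a, ha⟩ := Finite.surjective_of_injective hinj (PadicInt.toZModPow s z)
  refine ⟨a.val, lt_of_le_of_lt ?_ hs⟩
  rw [dist_eq_norm, norm_sub_rev, ← PadicInt.norm_p_pow]
  exact toZModPow_eq_toZModPow_iff.1 ha

theorem closure_range_eq_closedBall {u : ℕ → ℤ_[p]} {k : ℤ_[p]}
    (hu : ∀ a b : ℕ, ‖u a - u b‖ = ‖k‖ * ‖(a : ℤ_[p]) - b‖) :
    closure (range u) = closedBall (u 0) ‖k‖ := by
  have hmem (n : ℕ) : ‖u n - u 0‖ ≤ ‖k‖ := by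
    rw [hu]
    exact mul_le_of_le_one_right (norm_nonneg k) (PadicInt.norm_le_one _)
  refine subset_antisymm (closure_minimal ?_ isClosed_closedBall) fun z hz ↦ ?_
  · rintro _ ⟨n, rfl⟩
    exact mem_closedBall_iff_norm.2 (hmem n)
  choose v hv using fun n ↦ dvd_iff_norm_le.2 (hmem n)
  obtain ⟨w, hw⟩ := dvd_iff_norm_le.2 (mem_closedBall_iff_norm.1 hz)
  rcases eq_or_ne k 0 with rfl | hk
  · rw [zero_mul, sub_eq_zero] at hw
    exact subset_closure ⟨0, hw.symm⟩
  have hdense : DenseRange v := denseRange_of_norm_sub_eq fun a b ↦ by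
    refine mul_left_cancel₀ (norm_ne_zero_iff.2 hk) ?_
    rw [← hu, ← norm_mul, mul_sub, ← hv, ← hv, sub_sub_sub_cancel_right]
  have hcont : Continuous fun y ↦ u 0 + k * y := by fun_prop
  have hz' : z ∈ range fun y ↦ u 0 + k * y := ⟨w, by simp only [← hw, add_sub_cancel]⟩
  have hcomp : (fun y ↦ u 0 + k * y) '' range v = range u := by
    simp only [← range_comp, comp_def, ← hv, add_sub_cancel]
  exact hcomp ▸ hcont.range_subset_closure_image_dense hdense hz'

end Dilation

section Orbits

variable {m : ℕ} {c x z ε : ℤ_[p]}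

theorem norm_iterate_pow_sub (hodd : Odd p) (hm : ‖(m : ℤ_[p]) - 1‖ < 1) (hc : c ^ m = c)
    (hx : ‖x‖ = 1) (hxc : ‖x - c‖ < 1) (a b : ℕ) :
    ‖x ^ m ^ a - x ^ m ^ b‖ = ‖(x - c) * ((m : ℤ_[p]) - 1)‖ * ‖(a : ℤ_[p]) - b‖ := by
  wlog hab : b ≤ a generalizing a b
  · rw [norm_sub_rev, this b a (by omega), norm_sub_rev (b : ℤ_[p])]
  obtain ⟨n, rfl⟩ := Nat.exists_eq_add_of_le hab
  have hm1 : ‖(m : ℤ_[p])‖ = 1 := by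
    rw [← norm_one (α := ℤ_[p])]
    exact norm_eq_of_norm_sub_lt (by rwa [norm_one])
  have hcm (k : ℕ) : c ^ m ^ k = c := by
    simpa only [pow_iterate, IsFixedPt] using (show IsFixedPt (· ^ m) c from hc).iterate k
  have hdist : ‖x ^ m ^ b - c‖ = ‖x - c‖ := by
    conv_lhs => rw [← hcm b]
    rw [norm_pow_sub_pow hodd hxc hx, Nat.cast_pow, norm_pow, hm1, one_pow, mul_one]
  have hexp : ‖(m : ℤ_[p]) ^ n - 1‖ = ‖(m : ℤ_[p]) - 1‖ * ‖(n : ℤ_[p])‖ := by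
    simpa only [one_pow] using norm_pow_sub_pow hodd hm hm1 n
  have hstep := norm_pow_sub_mul hodd (x := x ^ m ^ b) (c := c) (ε := 1) (m := m ^ n)
    (by rw [norm_pow, hx, one_pow]) (hdist.trans_lt hxc) (by rw [hcm, one_mul])
  rw [one_mul, hdist, Nat.cast_pow, hexp] at hstep
  rw [pow_add, pow_mul, hstep, norm_mul, Nat.cast_add, add_sub_cancel_left, mul_assoc]

theorem closure_range_pow_pow (hodd : Odd p) (hm : ‖(m : ℤ_[p]) - 1‖ < 1) (hc : c ^ m = c)
    (hx : ‖x‖ = 1) (hxc : ‖x - c‖ < 1) :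
    closure (range fun n ↦ x ^ m ^ n) = closedBall x (‖x - c‖ * ‖(m : ℤ_[p]) - 1‖) := by
  simpa using closure_range_eq_closedBall (norm_iterate_pow_sub hodd hm hc hx hxc)

theorem norm_sub_eq_of_mem_closedBall {r : ℝ} (hx : x ∈ closedBall z r) (hr : r < ‖z - c‖) :
    ‖x - c‖ = ‖z - c‖ :=
  norm_eq_of_norm_sub_lt <| by
    simpa only [sub_sub_sub_cancel_right] using (mem_closedBall_iff_norm.1 hx).trans_lt hr

theorem norm_eq_one_of_mem_closedBall {r : ℝ} (hz : ‖z‖ = 1) (hx : x ∈ closedBall z r)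
    (hr : r < 1) : ‖x‖ = 1 :=
  hz ▸ norm_eq_of_norm_sub_lt (hz ▸ (mem_closedBall_iff_norm.1 hx).trans_lt hr)

theorem norm_sub_mul_norm_sub_one_lt (hm : ‖(m : ℤ_[p]) - 1‖ < 1) (hzc : z ≠ c) :
    ‖z - c‖ * ‖(m : ℤ_[p]) - 1‖ < ‖z - c‖ :=
  mul_lt_of_lt_one_right (norm_pos_iff.2 (sub_ne_zero.2 hzc)) hm

theorem mapsTo_pow_closedBall (hodd : Odd p) (hm : ‖(m : ℤ_[p]) - 1‖ < 1) (hc : c ^ m = ε * c)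
    (hz : ‖z‖ = 1) (hzc : z ≠ c) (hz1 : ‖z - c‖ < 1) :
    MapsTo (· ^ m) (closedBall z (‖z - c‖ * ‖(m : ℤ_[p]) - 1‖))
      (closedBall (ε * z) (‖z - c‖ * ‖(m : ℤ_[p]) - 1‖)) := by
  intro x hx
  have hr := norm_sub_mul_norm_sub_one_lt hm hzc
  have hxc := norm_sub_eq_of_mem_closedBall hx hr
  have hx1 := norm_eq_one_of_mem_closedBall hz hx (hr.trans hz1)
  have hsplit : x ^ m - ε * z = (x ^ m - ε * x) + ε * (x - z) := by ring
  rw [mem_closedBall_iff_norm] at hx ⊢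
  rw [hsplit]
  refine (IsUltrametricDist.norm_add_le_max _ _).trans (max_le ?_ ?_)
  · rw [norm_pow_sub_mul hodd hx1 (hxc.trans_lt hz1) hc, hxc]
  · rw [norm_mul]
    exact (mul_le_of_le_one_left (norm_nonneg _) ε.norm_le_one).trans hx

theorem isMinimalComponent_closedBall (hodd : Odd p) (hm1 : m ≠ 1)
    (hm : ‖(m : ℤ_[p]) - 1‖ < 1) (hc : c ^ m = c) (hz : ‖z‖ = 1) (hzc : z ≠ c)
    (hz1 : ‖z - c‖ < 1) :
    IsMinimalComponent (· ^ m) (closedBall z (‖z - c‖ * ‖(m : ℤ_[p]) - 1‖)) where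
  isClopen := IsUltrametricDist.isClopen_closedBall _ <|
    mul_ne_zero (norm_ne_zero_iff.2 (sub_ne_zero.2 hzc)) <|
      norm_ne_zero_iff.2 (sub_ne_zero.2 (by exact_mod_cast hm1))
  mapsTo := by
    simpa only [one_mul] using mapsTo_pow_closedBall (ε := 1) hodd hm (by rwa [one_mul]) hz hzc hz1
  subset_closure x hx := by
    have hr := norm_sub_mul_norm_sub_one_lt hm hzc
    have hxc := norm_sub_eq_of_mem_closedBall hx hr
    have hx1 := norm_eq_one_of_mem_closedBall hz hx (hr.trans hz1)
    simp only [pow_iterate]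
    rw [closure_range_pow_pow hodd hm hc hx1 (hxc.trans_lt hz1), hxc,
      IsUltrametricDist.closedBall_eq_of_mem hx]

/- If `f` sends `c` to `ε * c` with `ε ^ 2 = 1`, it swaps the two balls, while `f^[2]` is the
monomial map of degree `m ^ 2`, which fixes `c` and `ε * c` and for which
`‖m ^ 2 - 1‖ = ‖m - 1‖`. -/
theorem isMinimalComponent_closedBall_union (hodd : Odd p) (hm1 : m ≠ 1)
    (hm : ‖(m : ℤ_[p]) - 1‖ < 1) (hε : ε ^ 2 = 1) (hεm : ε ^ m = ε) (hc : c ^ m = ε * c)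
    (hz : ‖z‖ = 1) (hzc : z ≠ c) (hz1 : ‖z - c‖ < 1) :
    IsMinimalComponent (· ^ m) (closedBall z (‖z - c‖ * ‖(m : ℤ_[p]) - 1‖) ∪
      closedBall (ε * z) (‖z - c‖ * ‖(m : ℤ_[p]) - 1‖)) := by
  have hεε : ε * ε = 1 := by rw [← sq, hε]
  have hε1 : ‖ε‖ = 1 := norm_eq_one_of_pow_eq_one two_ne_zero hε
  have hεc : (ε * c) ^ m = ε * (ε * c) := by rw [mul_pow, hεm, hc]
  have hdist : ‖ε * z - ε * c‖ = ‖z - c‖ := by rw [← mul_sub, norm_mul, hε1, one_mul]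
  have hεzc : ε * z ≠ ε * c := by rwa [← sub_ne_zero, ← norm_ne_zero_iff, hdist,
    norm_ne_zero_iff, sub_ne_zero]
  have hεz : ‖ε * z‖ = 1 := by rw [norm_mul, hε1, hz, one_mul]
  have hm' : ‖(m : ℤ_[p])‖ = 1 := by
    rw [← norm_one (α := ℤ_[p])]
    exact norm_eq_of_norm_sub_lt (by rwa [norm_one])
  have hmm : ‖((m ^ 2 : ℕ) : ℤ_[p]) - 1‖ = ‖(m : ℤ_[p]) - 1‖ := by
    have h2 : ‖((2 : ℕ) : ℤ_[p])‖ = 1 :=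
      PadicInt.norm_natCast_eq_one_iff.2 hodd.coprime_two_right
    simpa only [one_pow, Nat.cast_pow, h2, mul_one] using norm_pow_sub_pow hodd hm hm' 2
  have hmm1 : m ^ 2 ≠ 1 := by simpa using hm1
  have hfix {y : ℤ_[p]} (hy : y ^ m = ε * y) : y ^ m ^ 2 = y := by
    rw [sq, pow_mul, hy, mul_pow, hεm, hy, ← mul_assoc, hεε, one_mul]
  refine IsMinimalComponent.union_of_iterate_two ?_ ?_
    (mapsTo_pow_closedBall hodd hm hc hz hzc hz1) ?_
  · rw [pow_iterate, ← hmm]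
    exact isMinimalComponent_closedBall hodd hmm1 (hmm ▸ hm) (hfix hc) hz hzc hz1
  · rw [pow_iterate, ← hmm, ← hdist]
    exact isMinimalComponent_closedBall hodd hmm1 (hmm ▸ hm) (hfix hεc) hεz hεzc (hdist ▸ hz1)
  · have := mapsTo_pow_closedBall hodd hm hεc hεz hεzc (hdist ▸ hz1)
    rwa [hdist, ← mul_assoc, hεε, one_mul] at this

end Orbits

section ResidueBall

variable {t l l' m : ℕ} {c c' s u u' x : ℤ_[p]}

/-- The ball `c + p ^ (l + 1) * u + p ^ (t + l + 1) * ℤ_[p]`. For a `p`-adic unit `u` and `t ≥ 1` it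
consists of points at distance `p ^ (-(l + 1))` from `c`. -/
def residueBall (t l : ℕ) (c u : ℤ_[p]) : Set ℤ_[p] :=
  {x | (p : ℤ_[p]) ^ (t + l + 1) ∣ x - (c + (p : ℤ_[p]) ^ (l + 1) * u)}

theorem residueBall_eq_closedBall :
    residueBall t l c u =
      closedBall (c + (p : ℤ_[p]) ^ (l + 1) * u) ‖(p : ℤ_[p]) ^ (t + l + 1)‖ := by
  ext x
  rw [mem_closedBall_iff_norm, ← dvd_iff_norm_le]
  rfl

theorem residueBall_natCast_add_mul (t l a i : ℕ) (c : ℤ_[p]) :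
    residueBall t l c (i + p * a : ℕ) = {x | (p : ℤ_[p]) ^ (t + l + 1) ∣
      x - (c + (p : ℤ_[p]) ^ (l + 1) * i + (p : ℤ_[p]) ^ (l + 2) * a)} := by
  have hcenter : c + (p : ℤ_[p]) ^ (l + 1) * (i + p * a : ℕ) =
      c + (p : ℤ_[p]) ^ (l + 1) * i + (p : ℤ_[p]) ^ (l + 2) * a := by
    push_cast
    ring
  rw [residueBall, hcenter]

theorem residueBall_neg_natCast_add_mul (t l a i : ℕ) (c : ℤ_[p]) :
    residueBall t l c (-(i + p * a : ℕ)) = {x | (p : ℤ_[p]) ^ (t + l + 1) ∣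
      x - (c - (p : ℤ_[p]) ^ (l + 1) * i - (p : ℤ_[p]) ^ (l + 2) * a)} := by
  have hcenter : c + (p : ℤ_[p]) ^ (l + 1) * (-(i + p * a : ℕ)) =
      c - (p : ℤ_[p]) ^ (l + 1) * i - (p : ℤ_[p]) ^ (l + 2) * a := by
    push_cast
    ring
  rw [residueBall, hcenter]

theorem mul_mem_residueBall (s : ℤ_[p]) (hx : x ∈ residueBall t l c u) :
    s * x ∈ residueBall t l (s * c) (s * u) := by
  have h : s * x - (s * c + (p : ℤ_[p]) ^ (l + 1) * (s * u)) =
      s * (x - (c + (p : ℤ_[p]) ^ (l + 1) * u)) := by ring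
  rw [residueBall, mem_ofPred_eq, h]
  exact hx.mul_left s

theorem norm_p_pow_succ_lt_one (n : ℕ) : ‖(p : ℤ_[p]) ^ (n + 1)‖ < 1 :=
  (PadicInt.norm_lt_one_iff_dvd _).2 (dvd_pow_self _ n.succ_ne_zero)

theorem norm_sub_of_mem_residueBall (ht : t ≠ 0) (hu : ‖u‖ = 1) (hx : x ∈ residueBall t l c u) :
    ‖x - c‖ = ‖(p : ℤ_[p]) ^ (l + 1)‖ := by
  have hdist : ‖c + (p : ℤ_[p]) ^ (l + 1) * u - c‖ = ‖(p : ℤ_[p]) ^ (l + 1)‖ := by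
    rw [add_sub_cancel_left, norm_mul, hu, mul_one]
  obtain ⟨t, rfl⟩ := Nat.exists_eq_succ_of_ne_zero ht
  rw [residueBall_eq_closedBall] at hx
  rw [← hdist]
  refine norm_sub_eq_of_mem_closedBall hx ?_
  rw [hdist, show t.succ + l + 1 = (t + 1) + (l + 1) by omega, pow_add, norm_mul]
  exact mul_lt_of_lt_one_left (norm_pos_iff.2 (pow_ne_zero _ PadicInt.prime_p.ne_zero))
    (norm_p_pow_succ_lt_one t)

theorem norm_sub_lt_one_of_mem_residueBall (ht : t ≠ 0) (hu : ‖u‖ = 1)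
    (hx : x ∈ residueBall t l c u) : ‖x - c‖ < 1 :=
  norm_sub_of_mem_residueBall ht hu hx ▸ norm_p_pow_succ_lt_one l

theorem residueBall_inj (hodd : Odd p) (ht : t ≠ 0) {d : ℕ} (hd : d ≠ 0) (hc : c ^ d = 1)
    (hc' : c' ^ d = 1) (hu : ‖u‖ = 1) (hu' : ‖u'‖ = 1) (hx : x ∈ residueBall t l c u)
    (hx' : x ∈ residueBall t l' c' u') : c = c' ∧ l = l' ∧ (p : ℤ_[p]) ^ t ∣ u - u' := by
  have hxc := toZMod_eq_toZMod_iff.2 (norm_sub_lt_one_of_mem_residueBall ht hu hx)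
  have hxc' := toZMod_eq_toZMod_iff.2 (norm_sub_lt_one_of_mem_residueBall ht hu' hx')
  obtain rfl : c = c' := eq_of_pow_eq_pow_of_norm_sub_lt_one hodd
    (norm_eq_one_of_pow_eq_one hd hc) hd (hc.trans hc'.symm)
    (toZMod_eq_toZMod_iff.1 (hxc.symm.trans hxc'))
  obtain rfl : l = l' := by
    have h := (norm_sub_of_mem_residueBall ht hu hx).symm.trans
      (norm_sub_of_mem_residueBall ht hu' hx')
    rw [norm_pow, norm_pow] at h
    exact Nat.succ_injective (pow_right_injective₀ (norm_pos_iff.2 PadicInt.prime_p.ne_zero)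
      ((PadicInt.norm_lt_one_iff_dvd _).2 dvd_rfl).ne h)
  refine ⟨rfl, rfl, (mul_dvd_mul_iff_left (pow_ne_zero (l + 1) PadicInt.prime_p.ne_zero)).1 ?_⟩
  have h := dvd_sub hx' hx
  rw [← pow_add, show l + 1 + t = t + l + 1 by omega]
  convert h using 1
  ring

theorem exists_mem_residueBall (ht : t ≠ 0) (hxc : x ≠ c) (hx1 : ‖x - c‖ < 1) :
    ∃ l n : ℕ, n < p ^ t ∧ ¬p ∣ n ∧ x ∈ residueBall t l c n := by
  have hne : x - c ≠ 0 := sub_ne_zero.2 hxc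
  have hspec := PadicInt.unitCoeff_spec hne
  set w : ℤ_[p] := ↑(PadicInt.unitCoeff hne)
  have hw1 : ‖w‖ = 1 := PadicInt.isUnit_iff.1 (PadicInt.unitCoeff hne).isUnit
  obtain ⟨l, hl⟩ : ∃ l, (x - c).valuation = l + 1 := by
    refine Nat.exists_eq_succ_of_ne_zero fun h0 ↦ hx1.ne ?_
    rw [hspec, h0, pow_zero, mul_one, hw1]
  obtain ⟨k, hk⟩ := Ideal.mem_span_singleton.1 (PadicInt.appr_spec t w)
  refine ⟨l, w.appr t, w.appr_lt t, ?_, k, ?_⟩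
  · rw [← hp.out.coprime_iff_not_dvd, ← PadicInt.norm_natCast_eq_one_iff, ← hw1]
    refine norm_eq_of_norm_sub_lt ?_
    obtain ⟨t, rfl⟩ := Nat.exists_eq_succ_of_ne_zero ht
    rw [norm_sub_rev, hk, norm_mul, hw1]
    exact mul_lt_one_of_nonneg_of_lt_one_left (norm_nonneg _) (norm_p_pow_succ_lt_one t)
      k.norm_le_one
  · rw [← sub_sub, hspec, hl]
    linear_combination (p : ℤ_[p]) ^ (l + 1) * hk

end ResidueBall

section Component

variable {t l l' m : ℕ} {c c' ε ε' u u' x : ℤ_[p]}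

/-- The union of a residue ball and its image under multiplication by `ε`, which is the shape of the
minimal components near a `c` with `c ^ m = ε * c` and `ε ^ 2 = 1`. For `ε = 1` it is a single
ball. -/
def component (t l : ℕ) (c ε u : ℤ_[p]) : Set ℤ_[p] :=
  residueBall t l c u ∪ residueBall t l (ε * c) (ε * u)

theorem exists_mem_residueBall_of_mem_component (hx : x ∈ component t l c ε u) :
    ∃ s, (s = 1 ∨ s = ε) ∧ x ∈ residueBall t l (s * c) (s * u) := by
  rcases hx with hx | hx
  · exact ⟨1, .inl rfl, by simpa only [one_mul] using hx⟩
  · exact ⟨ε, .inr rfl, hx⟩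

theorem norm_eq_one_of_mem_component (ht : t ≠ 0) (hε : ‖ε‖ = 1) (hc : ‖c‖ = 1) (hu : ‖u‖ = 1)
    (hx : x ∈ component t l c ε u) : ‖x‖ = 1 := by
  have norm_mul_eq_one {y : ℤ_[p]} (hy : ‖y‖ = 1) : ‖ε * y‖ = 1 := by rw [norm_mul, hε, hy, one_mul]
  rcases hx with hx | hx
  · rw [← hc]
    exact norm_eq_of_norm_sub_lt (hc ▸ norm_sub_lt_one_of_mem_residueBall ht hu hx)
  · rw [← norm_mul_eq_one hc]
    exact norm_eq_of_norm_sub_lt <| (norm_mul_eq_one hc).symm ▸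
      norm_sub_lt_one_of_mem_residueBall ht (norm_mul_eq_one hu) hx

theorem isMinimalComponent_component (hodd : Odd p) (ht : t ≠ 0)
    (hm : ‖(m : ℤ_[p]) - 1‖ = ‖(p : ℤ_[p]) ^ t‖) (hε : ε ^ 2 = 1) (hεm : ε ^ m = ε)
    (hcm : c ^ m = ε * c) (hc : ‖c‖ = 1) (hu : ‖u‖ = 1) :
    IsMinimalComponent (· ^ m) (component t l c ε u) := by
  have hp0 (k : ℕ) : (p : ℤ_[p]) ^ k ≠ 0 := pow_ne_zero k PadicInt.prime_p.ne_zero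
  have hm1 : m ≠ 1 := by
    rintro rfl
    rw [Nat.cast_one, sub_self, norm_zero, eq_comm, norm_eq_zero] at hm
    exact hp0 t hm
  have hm' : ‖(m : ℤ_[p]) - 1‖ < 1 := by
    obtain ⟨t, rfl⟩ := Nat.exists_eq_succ_of_ne_zero ht
    exact hm ▸ norm_p_pow_succ_lt_one t
  set z := c + (p : ℤ_[p]) ^ (l + 1) * u with hz
  have hzc : ‖z - c‖ = ‖(p : ℤ_[p]) ^ (l + 1)‖ := by
    rw [hz, add_sub_cancel_left, norm_mul, hu, mul_one]
  have hz1 : ‖z - c‖ < 1 := hzc ▸ norm_p_pow_succ_lt_one l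
  have hr : ‖z - c‖ * ‖(m : ℤ_[p]) - 1‖ = ‖(p : ℤ_[p]) ^ (t + l + 1)‖ := by
    rw [hzc, hm, ← norm_mul, ← pow_add, add_comm, add_assoc]
  have hεz : ε * z = ε * c + (p : ℤ_[p]) ^ (l + 1) * (ε * u) := by rw [hz]; ring
  rw [component, residueBall_eq_closedBall, residueBall_eq_closedBall, ← hz, ← hεz, ← hr]
  refine isMinimalComponent_closedBall_union hodd hm1 hm' hε hεm hcm ?_ ?_ hz1
  · rw [← hc]
    exact norm_eq_of_norm_sub_lt (hc ▸ hz1)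
  · rw [← sub_ne_zero, ← norm_ne_zero_iff, hzc, norm_ne_zero_iff]
    exact hp0 _

theorem component_inj (hodd : Odd p) (ht : t ≠ 0) {d : ℕ} (hd : d ≠ 0) (hc : c ^ d = 1)
    (hε : ε ^ d = 1) (hc' : c' ^ d = 1) (hε' : ε' ^ d = 1) (hu : ‖u‖ = 1) (hu' : ‖u'‖ = 1)
    (hx : x ∈ component t l c ε u) (hx' : x ∈ component t l' c' ε' u') :
    ∃ s s', (s = 1 ∨ s = ε) ∧ (s' = 1 ∨ s' = ε') ∧ s * c = s' * c' ∧ l = l' ∧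
      (p : ℤ_[p]) ^ t ∣ s * u - s' * u' := by
  obtain ⟨s, hs, hx⟩ := exists_mem_residueBall_of_mem_component hx
  obtain ⟨s', hs', hx'⟩ := exists_mem_residueBall_of_mem_component hx'
  have pow_eq_one {s ε : ℤ_[p]} (hε : ε ^ d = 1) (hs : s = 1 ∨ s = ε) : s ^ d = 1 := by
    rcases hs with rfl | rfl
    exacts [one_pow d, hε]
  have mul_pow_eq_one {s c : ℤ_[p]} (hs : s ^ d = 1) (hc : c ^ d = 1) : (s * c) ^ d = 1 := by
    rw [mul_pow, hs, hc, one_mul]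
  have norm_mul_eq_one {s u : ℤ_[p]} (hs : s ^ d = 1) (hu : ‖u‖ = 1) : ‖s * u‖ = 1 := by
    rw [norm_mul, hu, mul_one, norm_eq_one_of_pow_eq_one hd hs]
  have hsd := pow_eq_one hε hs
  have hsd' := pow_eq_one hε' hs'
  exact ⟨s, s', hs, hs', residueBall_inj hodd ht hd (mul_pow_eq_one hsd hc)
    (mul_pow_eq_one hsd' hc') (norm_mul_eq_one hsd hu) (norm_mul_eq_one hsd' hu') hx hx'⟩

theorem exists_mem_component (ht : t ≠ 0) (hε : ε ^ 2 = 1) (hxc : x ≠ c) (hxεc : x ≠ ε * c)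
    (hx : ‖x - c‖ < 1 ∨ ‖x - ε * c‖ < 1) :
    ∃ l n : ℕ, n < p ^ t ∧ ¬p ∣ n ∧ x ∈ component t l c ε n := by
  rcases hx with hx | hx
  · obtain ⟨l, n, hn, hpn, hmem⟩ := exists_mem_residueBall ht hxc hx
    exact ⟨l, n, hn, hpn, .inl hmem⟩
  · have hεx : ε * (ε * x) = x := by linear_combination x * hε
    have hne : ε * x ≠ c := fun h ↦ hxεc (by rw [← h, hεx])
    have hlt : ‖ε * x - c‖ < 1 := by
      have hsub : ε * x - c = ε * (x - ε * c) := by linear_combination c * hε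
      rw [hsub, norm_mul]
      exact (mul_le_of_le_one_left (norm_nonneg _) ε.norm_le_one).trans_lt hx
    obtain ⟨l, n, hn, hpn, hmem⟩ := exists_mem_residueBall ht hne hlt
    exact ⟨l, n, hn, hpn, .inr (hεx ▸ mul_mem_residueBall ε hmem)⟩

end Component

section Digits

variable {t a i n n' : ℕ}

theorem eq_of_pow_dvd_natCast_sub (hn : n < p ^ t) (hn' : n' < p ^ t)
    (h : (p : ℤ_[p]) ^ t ∣ (n : ℤ_[p]) - n') : n = n' := by
  rw [dvd_iff_norm_le, ← toZModPow_eq_toZModPow_iff, map_natCast, map_natCast,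
    ZMod.natCast_eq_natCast_iff'] at h
  rwa [Nat.mod_eq_of_lt hn, Nat.mod_eq_of_lt hn'] at h

theorem exists_digits_of_lt_pow {b : ℕ} (hb : 0 < b) (ht : t ≠ 0) (hn : n < b ^ t)
    (hbn : ¬b ∣ n) : ∃ a i, a < b ^ (t - 1) ∧ 1 ≤ i ∧ i < b ∧ n = i + b * a := by
  refine ⟨n / b, n % b, Nat.div_lt_of_lt_mul ?_, ?_, Nat.mod_lt n hb, (Nat.mod_add_div n b).symm⟩
  · rwa [mul_pow_sub_one ht]
  · exact Nat.pos_of_ne_zero fun h ↦ hbn (Nat.dvd_of_mod_eq_zero h)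

theorem add_mul_lt_pow {b : ℕ} (ht : t ≠ 0) (ha : a < b ^ (t - 1)) (hi : i < b) :
    i + b * a < b ^ t := by
  rw [← mul_pow_sub_one ht]
  nlinarith

theorem norm_natCast_add_mul_eq_one (hi : 1 ≤ i) (hip : i < p) :
    ‖((i + p * a : ℕ) : ℤ_[p])‖ = 1 := by
  rw [PadicInt.norm_natCast_eq_one_iff, hp.out.coprime_iff_not_dvd,
    Nat.dvd_add_left (dvd_mul_right p a)]
  exact Nat.not_dvd_of_pos_of_lt hi hip

end Digits

section Root

variable {R : Type*} [CommRing R] {I : R} {j m : ℕ}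

/-- Representatives `1`, `-1`, `I` of the orbits of `x ↦ x ^ 3` on the fourth roots of unity, where
`I ^ 2 = -1`; the orbit of `root I j` is `{root I j, root I j ^ 2 * root I j}`. Only the indices
`1, 2, 3` are meaningful. -/
def root (I : R) : ℕ → R
  | 1 => 1
  | 2 => -1
  | _ => I

theorem map_root {S : Type*} [CommRing S] (φ : R →+* S) (I : R) (j : ℕ) :
    φ (root I j) = root (φ I) j := by
  unfold root
  split <;> simp

theorem root_pow_four (hI : I ^ 2 = -1) (j : ℕ) : root I j ^ 4 = 1 := by
  unfold root
  split
  · ring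
  · ring
  · linear_combination (I ^ 2 - 1) * hI

theorem root_sq_sq (hI : I ^ 2 = -1) (j : ℕ) : (root I j ^ 2) ^ 2 = 1 := by
  rw [← pow_mul, root_pow_four hI]

theorem root_sq_pow_four (hI : I ^ 2 = -1) (j : ℕ) : (root I j ^ 2) ^ 4 = 1 := by
  rw [← pow_mul, mul_comm, pow_mul, root_pow_four hI, one_pow]

theorem root_pow (hI : I ^ 2 = -1) (hm : m % 4 = 3) (j : ℕ) :
    root I j ^ m = root I j ^ 2 * root I j := by
  rw [pow_eq_pow_mod m (root_pow_four hI j), hm, pow_succ]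

theorem root_sq_pow (hI : I ^ 2 = -1) (hm : m % 4 = 3) (j : ℕ) :
    (root I j ^ 2) ^ m = root I j ^ 2 := by
  rw [← pow_mul, mul_comm, pow_mul, root_pow hI hm]
  linear_combination root I j ^ 2 * root_pow_four hI j

theorem root_mem (I : R) (j : ℕ) : root I j ∈ ({1, -1, I, -I} : Set R) := by
  unfold root
  split <;> simp

theorem root_sq_mul_root_mem (hI : I ^ 2 = -1) (j : ℕ) :
    root I j ^ 2 * root I j ∈ ({1, -1, I, -I} : Set R) := by
  unfold root
  split <;> simp [hI]

theorem pow_four_eq_one_of_mem (hI : I ^ 2 = -1) {y : R} (hy : y ∈ ({1, -1, I, -I} : Set R)) :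
    y ^ 4 = 1 := by
  have hI4 : I ^ 4 = 1 := root_pow_four hI 3
  rcases hy with rfl | rfl | rfl | rfl
  exacts [one_pow 4, Even.neg_one_pow ⟨2, rfl⟩, hI4, by rwa [Even.neg_pow ⟨2, rfl⟩]]

theorem pow_fixed_and_swap (hI : I ^ 2 = -1) (hm : m % 4 = 3) :
    (1 : R) ^ m = 1 ∧ (-1 : R) ^ m = -1 ∧ I ^ m = -I ∧ (-I) ^ m = I := by
  have hodd : Odd m := Nat.odd_iff.2 (by omega)
  have hIm : I ^ m = -I := by
    have h : I ^ m = I ^ 2 * I := root_pow hI hm 3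
    rw [h, hI, neg_one_mul]
  exact ⟨one_pow m, hodd.neg_one_pow, hIm, by rw [hodd.neg_pow, hIm, neg_neg]⟩

end Root

section RootResidue

variable {I x : ℤ_[5]} {j j' : ℕ}

theorem toZMod_eq_two (hI5 : (5 : ℤ_[5]) ∣ I - 2) : PadicInt.toZMod I = (2 : ZMod 5) := by
  rw [← map_ofNat (PadicInt.toZMod (p := 5)) 2, toZMod_eq_toZMod_iff,
    PadicInt.norm_lt_one_iff_dvd]
  exact_mod_cast hI5

theorem eq_of_mul_root_two_eq : ∀ j ∈ Finset.Icc 1 3, ∀ j' ∈ Finset.Icc 1 3, ∀ s s' : ZMod 5,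
    (s = 1 ∨ s = root 2 j ^ 2) → (s' = 1 ∨ s' = root 2 j' ^ 2) →
    s * root 2 j = s' * root 2 j' → j = j' := by
  decide

theorem exists_eq_root_two : ∀ y : ZMod 5, y ≠ 0 →
    ∃ j ∈ Finset.Icc 1 3, y = root 2 j ∨ y = root 2 j ^ 2 * root 2 j := by
  decide

theorem eq_of_mul_root_eq (hI5 : (5 : ℤ_[5]) ∣ I - 2) (hj : j ∈ Finset.Icc 1 3)
    (hj' : j' ∈ Finset.Icc 1 3) {s s' : ℤ_[5]} (hs : s = 1 ∨ s = root I j ^ 2)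
    (hs' : s' = 1 ∨ s' = root I j' ^ 2) (h : s * root I j = s' * root I j') : j = j' := by
  have map_factor {s : ℤ_[5]} {j : ℕ} (hs : s = 1 ∨ s = root I j ^ 2) :
      PadicInt.toZMod s = 1 ∨ PadicInt.toZMod s = (root 2 j ^ 2 : ZMod 5) := by
    rcases hs with rfl | rfl
    · exact .inl (map_one _)
    · exact .inr (by rw [map_pow, map_root, toZMod_eq_two hI5])
  refine eq_of_mul_root_two_eq j hj j' hj' _ _ (map_factor hs) (map_factor hs') ?_
  simpa only [map_mul, map_root, toZMod_eq_two hI5] using congrArg PadicInt.toZMod h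

theorem exists_norm_sub_root_lt_one (hI5 : (5 : ℤ_[5]) ∣ I - 2) (hx : ‖x‖ = 1) :
    ∃ j ∈ Finset.Icc 1 3, ‖x - root I j‖ < 1 ∨ ‖x - root I j ^ 2 * root I j‖ < 1 := by
  have hx0 : PadicInt.toZMod x ≠ 0 := by
    rw [← map_zero (PadicInt.toZMod (p := 5)), Ne, toZMod_eq_toZMod_iff, sub_zero, hx]
    exact lt_irrefl 1
  simpa only [← toZMod_eq_toZMod_iff, map_mul, map_pow, map_root, toZMod_eq_two hI5]
    using exists_eq_root_two _ hx0

end RootResidue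

section Decomposition

variable {I x : ℤ_[5]} {m t l l' a a' i i' j j' : ℕ}

/-- The set `M_{l,a,i,j}`, for the digits `1 ≤ i ≤ 4`, `a < 5 ^ (t - 1)` and the fourth root of
unity `root I j`. -/
def rootComponent (I : ℤ_[5]) (t l a i j : ℕ) : Set ℤ_[5] :=
  component t l (root I j) (root I j ^ 2) (i + 5 * a : ℕ)

theorem rootComponent_one (I : ℤ_[5]) (t l a i : ℕ) : rootComponent I t l a i 1 =
    {x : ℤ_[5] | (5 : ℤ_[5]) ^ (t + l + 1) ∣
      x - (1 + 5 ^ (l + 1) * (i : ℤ_[5]) + 5 ^ (l + 2) * (a : ℤ_[5]))} := by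
  simpa only [rootComponent, component, root, one_pow, one_mul, union_self, Nat.cast_ofNat] using
    residueBall_natCast_add_mul (p := 5) t l a i 1

theorem rootComponent_two (I : ℤ_[5]) (t l a i : ℕ) : rootComponent I t l a i 2 =
    {x : ℤ_[5] | (5 : ℤ_[5]) ^ (t + l + 1) ∣
      x - (-1 + 5 ^ (l + 1) * (i : ℤ_[5]) + 5 ^ (l + 2) * (a : ℤ_[5]))} := by
  simpa only [rootComponent, component, root, neg_one_sq, one_mul, union_self, Nat.cast_ofNat] using
    residueBall_natCast_add_mul (p := 5) t l a i (-1)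

theorem rootComponent_three (hI2 : I ^ 2 = -1) (t l a i : ℕ) : rootComponent I t l a i 3 =
    {x : ℤ_[5] | (5 : ℤ_[5]) ^ (t + l + 1) ∣
      x - (I + 5 ^ (l + 1) * (i : ℤ_[5]) + 5 ^ (l + 2) * (a : ℤ_[5]))} ∪
    {x : ℤ_[5] | (5 : ℤ_[5]) ^ (t + l + 1) ∣
      x - (-I - 5 ^ (l + 1) * (i : ℤ_[5]) - 5 ^ (l + 2) * (a : ℤ_[5]))} := by
  simpa only [rootComponent, component, root, hI2, neg_one_mul, Nat.cast_ofNat] using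
    congrArg₂ (· ∪ ·) (residueBall_natCast_add_mul (p := 5) t l a i I)
      (residueBall_neg_natCast_add_mul (p := 5) t l a i (-I))

theorem norm_natCast_digits_eq_one (hi : 1 ≤ i ∧ i ≤ 4) :
    ‖((i + 5 * a : ℕ) : ℤ_[5])‖ = 1 :=
  norm_natCast_add_mul_eq_one hi.1 (Nat.lt_succ_of_le hi.2)

theorem norm_eq_one_of_mem_rootComponent (hI2 : I ^ 2 = -1) (ht : t ≠ 0)
    (hi : 1 ≤ i ∧ i ≤ 4) (hx : x ∈ rootComponent I t l a i j) : ‖x‖ = 1 :=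
  norm_eq_one_of_mem_component ht (norm_eq_one_of_pow_eq_one two_ne_zero (root_sq_sq hI2 j))
    (norm_eq_one_of_pow_eq_one four_ne_zero (root_pow_four hI2 j))
    (norm_natCast_digits_eq_one hi) hx

theorem exists_mem_rootComponent (hI2 : I ^ 2 = -1) (hI5 : (5 : ℤ_[5]) ∣ I - 2) (ht : t ≠ 0)
    (hx : ‖x‖ = 1) (hx' : x ∉ ({1, -1, I, -I} : Set ℤ_[5])) :
    ∃ l, ∃ a ∈ Finset.range (5 ^ (t - 1)), ∃ i ∈ Finset.Icc 1 4, ∃ j ∈ Finset.Icc 1 3,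
      x ∈ rootComponent I t l a i j := by
  obtain ⟨j, hj, hnear⟩ := exists_norm_sub_root_lt_one hI5 hx
  obtain ⟨l, n, hn, h5n, hmem⟩ := exists_mem_component ht (root_sq_sq hI2 j)
    (ne_of_mem_of_not_mem (root_mem I j) hx').symm
    (ne_of_mem_of_not_mem (root_sq_mul_root_mem hI2 j) hx').symm hnear
  obtain ⟨a, i, ha, hi, hi5, rfl⟩ := exists_digits_of_lt_pow (by decide) ht hn h5n
  exact ⟨l, a, Finset.mem_range.2 ha, i, Finset.mem_Icc.2 ⟨hi, Nat.le_of_lt_succ hi5⟩, j, hj, hmem⟩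

theorem isMinimalComponent_rootComponent (hI2 : I ^ 2 = -1) (hm4 : m % 4 = 3) (ht : t ≠ 0)
    (hmt : ‖(m : ℤ_[5]) - 1‖ = ‖(5 : ℤ_[5]) ^ t‖) (hi : 1 ≤ i ∧ i ≤ 4) :
    IsMinimalComponent (· ^ m) (rootComponent I t l a i j) :=
  isMinimalComponent_component (by decide) ht hmt (root_sq_sq hI2 j) (root_sq_pow hI2 hm4 j)
    (root_pow hI2 hm4 j) (norm_eq_one_of_pow_eq_one four_ne_zero (root_pow_four hI2 j))
    (norm_natCast_digits_eq_one hi)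

theorem eq_of_mem_rootComponent (hI2 : I ^ 2 = -1) (hI5 : (5 : ℤ_[5]) ∣ I - 2) (ht : t ≠ 0)
    (ha : a < 5 ^ (t - 1)) (ha' : a' < 5 ^ (t - 1)) (hi : 1 ≤ i ∧ i ≤ 4)
    (hi' : 1 ≤ i' ∧ i' ≤ 4) (hj : 1 ≤ j ∧ j ≤ 3) (hj' : 1 ≤ j' ∧ j' ≤ 3)
    (hx : x ∈ rootComponent I t l a i j) (hx' : x ∈ rootComponent I t l' a' i' j') :
    (l, a, i, j) = (l', a', i', j') := by
  obtain ⟨s, s', hs, hs', hsc, rfl, hdvd⟩ := component_inj (by decide) ht four_ne_zero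
    (root_pow_four hI2 j) (root_sq_pow_four hI2 j) (root_pow_four hI2 j')
    (root_sq_pow_four hI2 j') (norm_natCast_digits_eq_one hi)
    (norm_natCast_digits_eq_one hi') hx hx'
  obtain rfl := eq_of_mul_root_eq hI5 (Finset.mem_Icc.2 hj) (Finset.mem_Icc.2 hj') hs hs' hsc
  have hroot : root I j ≠ 0 := (IsUnit.of_pow_eq_one (root_pow_four hI2 j) four_ne_zero).ne_zero
  obtain rfl := mul_right_cancel₀ hroot hsc
  have hsunit : IsUnit s := by
    rcases hs with rfl | rfl
    exacts [isUnit_one, IsUnit.of_pow_eq_one (root_sq_sq hI2 j) two_ne_zero]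
  rw [← mul_sub, hsunit.dvd_mul_left] at hdvd
  have hn := eq_of_pow_dvd_natCast_sub (add_mul_lt_pow ht ha (Nat.lt_succ_of_le hi.2))
    (add_mul_lt_pow ht ha' (Nat.lt_succ_of_le hi'.2)) hdvd
  obtain ⟨rfl, rfl⟩ : a = a' ∧ i = i' := by omega
  rfl

theorem disjoint_rootComponent (hI2 : I ^ 2 = -1) (hI5 : (5 : ℤ_[5]) ∣ I - 2) (ht : t ≠ 0)
    (ha : a < 5 ^ (t - 1)) (ha' : a' < 5 ^ (t - 1)) (hi : 1 ≤ i ∧ i ≤ 4)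
    (hi' : 1 ≤ i' ∧ i' ≤ 4) (hj : 1 ≤ j ∧ j ≤ 3) (hj' : 1 ≤ j' ∧ j' ≤ 3)
    (hne : (l, a, i, j) ≠ (l', a', i', j')) :
    Disjoint (rootComponent I t l a i j) (rootComponent I t l' a' i' j') :=
  Set.disjoint_left.2 fun _ hx hx' ↦
    hne (eq_of_mem_rootComponent hI2 hI5 ht ha ha' hi hi' hj hj' hx hx')

theorem iUnion_rootComponent_union (hI2 : I ^ 2 = -1) (hI5 : (5 : ℤ_[5]) ∣ I - 2) (ht : t ≠ 0) :
    (⋃ l : ℕ, ⋃ a ∈ Finset.range (5 ^ (t - 1)), ⋃ i ∈ Finset.Icc 1 4, ⋃ j ∈ Finset.Icc 1 3,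
      rootComponent I t l a i j) ∪ {1, -1, I, -I} = {x : ℤ_[5] | ¬(5 : ℤ_[5]) ∣ x} := by
  ext x
  simp only [mem_union, mem_iUnion, exists_prop]
  refine Iff.trans ⟨?_, fun hx ↦ ?_⟩ (norm_eq_one_iff_not_dvd (p := 5) (x := x))
  · rintro (⟨l, a, -, i, hi, j, -, hx⟩ | hx)
    · exact norm_eq_one_of_mem_rootComponent hI2 ht (Finset.mem_Icc.1 hi) hx
    · exact norm_eq_one_of_pow_eq_one four_ne_zero (pow_four_eq_one_of_mem hI2 hx)
  · exact or_iff_not_imp_right.2 (exists_mem_rootComponent hI2 hI5 ht hx)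

end Decomposition

end PadicMonomial

open PadicMonomial

/-- Minimal decomposition for `x ↦ x^m` on `ℤ_5` with `m ≡ 11 (mod 20)`:
the sets `M_{l,a,i,1} = 1 + 5^(l+1)i + 5^(l+2)a + 5^(t+l+1)ℤ_5`,
`M_{l,a,i,2} = -1 + 5^(l+1)i + 5^(l+2)a + 5^(t+l+1)ℤ_5` and
`M_{l,a,i,3} = (𝕚 + 5^(l+1)i + 5^(l+2)a + 5^(t+l+1)ℤ_5) ∪
(-𝕚 - 5^(l+1)i - 5^(l+2)a + 5^(t+l+1)ℤ_5)` are pairwise disjoint clopen minimal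
components, together with `{1, -1, 𝕚, -𝕚}` they cover exactly the 5-adic units;
moreover `1, -1` are fixed and `𝕚, -𝕚` form a 2-cycle. -/
theorem monomial_Z5_eleven_mod_twenty_decomposition (m : ℕ) (hm : 2 ≤ m)
    (hmod : m % 20 = 11)
    (t : ℕ) (ht : t = padicValNat 5 (m - 1))
    (I : ℤ_[5]) (hI2 : I ^ 2 = -1) (hI5 : (5 : ℤ_[5]) ∣ I - 2)
    (M : ℕ → ℕ → ℕ → ℕ → Set ℤ_[5])
    (hM1 : ∀ l a i, M l a i 1 =
      {x : ℤ_[5] | (5 : ℤ_[5]) ^ (t + l + 1) ∣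
        x - (1 + 5 ^ (l + 1) * (i : ℤ_[5]) + 5 ^ (l + 2) * (a : ℤ_[5]))})
    (hM2 : ∀ l a i, M l a i 2 =
      {x : ℤ_[5] | (5 : ℤ_[5]) ^ (t + l + 1) ∣
        x - (-1 + 5 ^ (l + 1) * (i : ℤ_[5]) + 5 ^ (l + 2) * (a : ℤ_[5]))})
    (hM3 : ∀ l a i, M l a i 3 =
      {x : ℤ_[5] | (5 : ℤ_[5]) ^ (t + l + 1) ∣
        x - (I + 5 ^ (l + 1) * (i : ℤ_[5]) + 5 ^ (l + 2) * (a : ℤ_[5]))} ∪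
      {x : ℤ_[5] | (5 : ℤ_[5]) ^ (t + l + 1) ∣
        x - (-I - 5 ^ (l + 1) * (i : ℤ_[5]) - 5 ^ (l + 2) * (a : ℤ_[5]))}) :
    (∀ l a i j l' a' i' j',
      a < 5 ^ (t - 1) → a' < 5 ^ (t - 1) → 1 ≤ i → i ≤ 4 → 1 ≤ i' → i' ≤ 4 →
      1 ≤ j → j ≤ 3 → 1 ≤ j' → j' ≤ 3 →
      (l, a, i, j) ≠ (l', a', i', j') → Disjoint (M l a i j) (M l' a' i' j')) ∧
    (∀ l a i j, a < 5 ^ (t - 1) → 1 ≤ i → i ≤ 4 → 1 ≤ j → j ≤ 3 →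
      IsClopen (M l a i j) ∧
      (∀ x ∈ M l a i j, x ^ m ∈ M l a i j) ∧
      (∀ x ∈ M l a i j, M l a i j ⊆ closure (Set.range fun n : ℕ => x ^ m ^ n))) ∧
    ((⋃ l : ℕ, ⋃ a ∈ Finset.range (5 ^ (t - 1)), ⋃ i ∈ Finset.Icc 1 4,
        ⋃ j ∈ Finset.Icc 1 3, M l a i j)
        ∪ {1, -1, I, -I} = {x : ℤ_[5] | ¬ (5 : ℤ_[5]) ∣ x}) ∧
    ((1 : ℤ_[5]) ^ m = 1 ∧ (-1 : ℤ_[5]) ^ m = -1 ∧ I ^ m = -I ∧ (-I) ^ m = I) := by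
  have ht0 : t ≠ 0 := by
    have := one_le_padicValNat_of_dvd (p := 5) (n := m - 1) (by omega) (by omega)
    omega
  have hmt : ‖(m : ℤ_[5]) - 1‖ = ‖(5 : ℤ_[5]) ^ t‖ := ht ▸ norm_natCast_sub_one (by omega)
  have hm4 : m % 4 = 3 := by omega
  have hM (l a i j : ℕ) (hj : 1 ≤ j ∧ j ≤ 3) : M l a i j = rootComponent I t l a i j := by
    obtain ⟨hj1, hj3⟩ := hj
    interval_cases j
    exacts [(hM1 l a i).trans (rootComponent_one I t l a i).symm,
      (hM2 l a i).trans (rootComponent_two I t l a i).symm,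
      (hM3 l a i).trans (rootComponent_three hI2 t l a i).symm]
  refine ⟨fun l a i j l' a' i' j' ha ha' hi hi4 hi' hi4' hj hj3 hj' hj3' hne ↦ ?_,
    fun l a i j _ hi hi4 hj hj3 ↦ ?_, ?_, pow_fixed_and_swap hI2 hm4⟩
  · rw [hM l a i j ⟨hj, hj3⟩, hM l' a' i' j' ⟨hj', hj3'⟩]
    exact disjoint_rootComponent hI2 hI5 ht0 ha ha' ⟨hi, hi4⟩ ⟨hi', hi4'⟩ ⟨hj, hj3⟩ ⟨hj', hj3'⟩ hne
  · rw [hM l a i j ⟨hj, hj3⟩, ← isMinimalComponent_pow_iff]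
    exact isMinimalComponent_rootComponent hI2 hm4 ht0 hmt ⟨hi, hi4⟩
  · rw [← iUnion_rootComponent_union hI2 hI5 ht0]
    exact congrArg (· ∪ _) <| Set.iUnion_congr fun l ↦ Set.iUnion₂_congr fun a _ ↦
      Set.iUnion₂_congr fun i _ ↦ Set.iUnion₂_congr fun j hj ↦ hM l a i j (Finset.mem_Icc.1 hj)
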